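/- arXiv:1303.3345 — 2 statements merged into one kernel-verified Lean document; each statement's English description precedes it below -/
import Mathlib

section
/- Assume the base hypotheses and Condition (M). Suppose f ∈ RV₀(β) for some β > 1 and there exists L > 0 such that lim_{t→∞} g(t)/(f∘F⁻¹)(t) = L. Then the unique continuous solution x of x'(t) = -f(x(t)) + g(t), x(0) = ξ > 0, satisfies x(t) → 0 as t → ∞ and lim_{t→∞} F(x(t))/t = Λ*, where Λ* ∈ (0,1) is the unique solution of (1 - Λ*)·Λ*^{-β/(β-1)} = L. -/
open Filter Real Set Topology MeasureTheory

noncomputable section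

/-- A function `f : (0,∞) → (0,∞)` is regularly varying at `0` with index `β` if
`f(λx)/f(x) → λ^β` as `x → 0⁺` for every `λ > 0`. -/
def RVat0 (f : ℝ → ℝ) (β : ℝ) : Prop :=
  ∀ lam : ℝ, 0 < lam →
    Tendsto (fun x => f (lam * x) / f x) (nhdsWithin 0 (Set.Ioi 0)) (nhds (lam ^ β))

/-- A function `h : (0,∞) → (0,∞)` is regularly varying at `∞` with index `α` if
`h(λt)/h(t) → λ^α` as `t → ∞` for every `λ > 0`. -/
def RVatInf (h : ℝ → ℝ) (α : ℝ) : Prop :=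
  ∀ lam : ℝ, 0 < lam →
    Tendsto (fun t => h (lam * t) / h t) atTop (nhds (lam ^ α))

/-- A continuous solution of the perturbed ODE `x'(t) = -f(x(t)) + g(t)`, `t > 0`,
with initial condition `x(0) = ξ`. -/
def IsSol (f g : ℝ → ℝ) (ξ : ℝ) (x : ℝ → ℝ) : Prop :=
  ContinuousOn x (Set.Ici 0) ∧ x 0 = ξ ∧
    ∀ t : ℝ, 0 < t → HasDerivAt x (-f (x t) + g t) t

/-!
With `y = F ∘ x` the equation becomes `y' = 1 - g / f(x)`. If `x(t) ~ m F⁻¹(t)`, regular variation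
of `f` and of `F` (the latter with index `1 - β`, by l'Hôpital) gives `y(t) / t → m ^ (1 - β)` and
`y'(t) → 1 - L m ^ (-β)`. These agree exactly for `m = μ` with `Λ* = μ ^ (1 - β)`, and this balance
is attracting: once `y(t) ≥ l t` for some `l > Λ*`, the almost monotonicity of `f` forces
`y'(t) ≤ Λ* < l`, so `y(t) - l t` decreases at a linear rate until it is negative; and symmetrically
for `l < Λ*`.
-/

section Calculus

theorem exists_one_lt_mul_lt {a b : ℝ} (hab : a < b) : ∃ K, 1 < K ∧ K * a < b := by
  have hlim : Tendsto (fun K : ℝ => K * a) (𝓝[>] 1) (𝓝 (1 * a)) :=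
    (tendsto_id.mul_const a).mono_left nhdsWithin_le_nhds
  rw [one_mul] at hlim
  exact (eventually_mem_nhdsWithin.and (hlim.eventually_lt_const hab)).exists

theorem lhopital_infty_nhdsGT {P Q P' Q' : ℝ → ℝ} {a c : ℝ}
    (hP : ∀ᶠ y in 𝓝[>] a, HasDerivAt P (P' y) y) (hQ : ∀ᶠ y in 𝓝[>] a, HasDerivAt Q (Q' y) y)
    (hQ' : ∀ᶠ y in 𝓝[>] a, Q' y ≠ 0) (hQ_infty : Tendsto (fun y => |Q y|) (𝓝[>] a) atTop)
    (h : Tendsto (fun y => P' y / Q' y) (𝓝[>] a) (𝓝 c)) :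
    Tendsto (fun y => P y / Q y) (𝓝[>] a) (𝓝 c) := by
  suffices hlittle : (fun y => P y - c * Q y) =o[𝓝[>] a] Q by
    have hlim := hlittle.tendsto_div_nhds_zero.add_const c
    rw [zero_add] at hlim
    refine hlim.congr' ?_
    filter_upwards [hQ_infty.eventually_gt_atTop 0] with y hy
    have hQy : Q y ≠ 0 := abs_pos.1 hy
    field_simp
    ring
  refine Asymptotics.isLittleO_iff.2 fun ε hε => ?_
  have hclose := Metric.tendsto_nhds.1 h (ε / 2) (half_pos hε)
  obtain ⟨d, had, hd⟩ := mem_nhdsGT_iff_exists_Ioc_subset.1 (hP.and (hQ.and (hQ'.and hclose)))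
  have hcauchy : ∀ y ∈ Ioo a d,
      |(P d - c * Q d) - (P y - c * Q y)| ≤ ε / 2 * |Q d - Q y| := by
    intro y hy
    have hsub : Icc y d ⊆ Ioc a d := fun u hu => ⟨hy.1.trans_le hu.1, hu.2⟩
    obtain ⟨u, hu, hslope⟩ := exists_ratio_hasDerivAt_eq_ratio_slope P P' hy.2
      (fun u hu => (hd (hsub hu)).1.continuousAt.continuousWithinAt)
      (fun u hu => (hd (hsub (Ioo_subset_Icc_self hu))).1) Q Q'
      (fun u hu => (hd (hsub hu)).2.1.continuousAt.continuousWithinAt)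
      (fun u hu => (hd (hsub (Ioo_subset_Icc_self hu))).2.1)
    obtain ⟨-, -, hne, hdist⟩ := hd (hsub (Ioo_subset_Icc_self hu))
    have hdiff : (P d - c * Q d) - (P y - c * Q y) = (P' u / Q' u - c) * (Q d - Q y) := by
      field_simp
      linear_combination -hslope
    rw [hdiff, abs_mul]
    gcongr
    exact hdist.le
  filter_upwards [Ioo_mem_nhdsGT had,
    (hQ_infty.const_mul_atTop (half_pos hε)).eventually_ge_atTop
      (|P d - c * Q d| + ε / 2 * |Q d|)] with y hy hlarge
  have hsplit := abs_sub_abs_le_abs_sub (P y - c * Q y) (P d - c * Q d)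
  rw [abs_sub_comm (P y - c * Q y)] at hsplit
  have htriangle := mul_le_mul_of_nonneg_left (abs_sub (Q d) (Q y)) (half_pos hε).le
  rw [Real.norm_eq_abs, Real.norm_eq_abs]
  linarith [hcauchy y hy]

theorem pos_of_hasDerivAt_pos_of_eq_zero {z z' : ℝ → ℝ} {a b : ℝ} (hab : a ≤ b)
    (hz : ContinuousOn z (Icc a b)) (hz' : ∀ t ∈ Ioc a b, HasDerivAt z (z' t) t)
    (ha : 0 < z a) (h : ∀ t ∈ Ioc a b, z t = 0 → 0 < z' t) : 0 < z b := by
  by_contra! hb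
  obtain ⟨c, ⟨hc, hzc : z c ≤ 0⟩, hleast⟩ : ∃ c, IsLeast (Icc a b ∩ z ⁻¹' Iic 0) c :=
    (isCompact_Icc.of_isClosed_subset (hz.preimage_isClosed_of_isClosed isClosed_Icc isClosed_Iic)
      inter_subset_left).exists_isLeast ⟨b, right_mem_Icc.2 hab, hb⟩
  have hac : a < c := hc.1.lt_of_ne (by rintro rfl; exact hzc.not_gt ha)
  have hzero : z c = 0 := by
    obtain ⟨t, ht, hzt⟩ := intermediate_value_Icc' hac.le
      (hz.mono (Icc_subset_Icc_right hc.2)) ⟨hzc, ha.le⟩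
    have hct : c ≤ t := hleast ⟨⟨ht.1, ht.2.trans hc.2⟩, hzt.le⟩
    rwa [← hct.antisymm ht.2] at hzt
  have hderiv : 0 < deriv z c := by
    rw [(hz' c ⟨hac, hc.2⟩).deriv]
    exact h c ⟨hac, hc.2⟩ hzero
  obtain ⟨t, hsign, ht⟩ := ((eventually_nhdsWithin_sign_eq_of_deriv_pos hderiv hzero).filter_mono
    nhdsWithin_le_nhds |>.and (Ioo_mem_nhdsLT hac)).exists
  have hzt : z t < 0 := by
    rwa [sign_neg (sub_neg.2 ht.2), sign_eq_neg_one_iff] at hsign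
  exact (hleast ⟨⟨ht.1.le, ht.2.le.trans hc.2⟩, hzt.le⟩).not_gt ht.2

theorem eventually_neg_of_deriv_le {z z' : ℝ → ℝ} {c : ℝ} (hc : 0 < c)
    (hz : ∀ᶠ t in atTop, HasDerivAt z (z' t) t) (h : ∀ᶠ t in atTop, 0 ≤ z t → z' t ≤ -c) :
    ∀ᶠ t in atTop, z t < 0 := by
  obtain ⟨T, hT⟩ := eventually_atTop.1 (hz.and h)
  have hcont : ∀ {s : Set ℝ}, s ⊆ Ici T → ContinuousOn z s :=
    fun hs t ht => (hT t (hs ht)).1.continuousAt.continuousWithinAt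
  obtain ⟨s, hTs, hs⟩ : ∃ s, T ≤ s ∧ z s < 0 := by
    by_contra! hnonneg
    have hTt : T ≤ T + (z T / c + 1) := by
      have := div_nonneg (hnonneg T le_rfl) hc.le
      linarith
    have hdecay := (convex_Ici T).image_sub_le_mul_sub_of_deriv_le (C := -c) (hcont subset_rfl)
      (fun t ht => (hT t (interior_subset ht)).1.differentiableAt.differentiableWithinAt)
      (fun t ht => by
        have ht := interior_subset ht
        rw [(hT t ht).1.deriv]
        exact (hT t ht).2 (hnonneg t ht)) T self_mem_Ici _ hTt hTt
    have hvalue : -c * (T + (z T / c + 1) - T) = -z T - c := by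
      field_simp
      ring
    linarith [hnonneg _ hTt]
  filter_upwards [eventually_ge_atTop s] with t ht
  have hneg := pos_of_hasDerivAt_pos_of_eq_zero (z := fun u => -z u) (z' := fun u => -z' u) ht
    (hcont fun u hu => hTs.trans hu.1).neg (fun u hu => (hT u (hTs.trans hu.1.le)).1.neg)
    (neg_pos.2 hs) (fun u hu hzu => by
      have := (hT u (hTs.trans hu.1.le)).2 (neg_eq_zero.1 hzu).ge
      linarith)
  exact neg_pos.1 hneg

theorem eventually_lt_mul_of_deriv_le {y y' : ℝ → ℝ} {Λ l : ℝ} (hl : Λ < l)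
    (hy : ∀ᶠ t in atTop, HasDerivAt y (y' t) t)
    (h : ∀ᶠ t in atTop, l * t ≤ y t → y' t ≤ Λ) : ∀ᶠ t in atTop, y t < l * t := by
  have hneg := eventually_neg_of_deriv_le (z := fun t => y t - l * t) (z' := fun t => y' t - l * 1)
    (sub_pos.2 hl) (hy.mono fun t ht => ht.sub ((hasDerivAt_id t).const_mul l))
    (h.mono fun t ht hyt => by linarith [ht (sub_nonneg.1 hyt)])
  exact hneg.mono fun t ht => sub_neg.1 ht

theorem tendsto_div_id_of_deriv_feedback {y y' : ℝ → ℝ} {Λ : ℝ}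
    (hy : ∀ᶠ t in atTop, HasDerivAt y (y' t) t)
    (hupper : ∀ l, Λ < l → ∀ᶠ t in atTop, l * t ≤ y t → y' t ≤ Λ)
    (hlower : ∀ l, l < Λ → ∀ᶠ t in atTop, y t ≤ l * t → Λ ≤ y' t) :
    Tendsto (fun t => y t / t) atTop (𝓝 Λ) := by
  refine tendsto_order.2 ⟨fun l hl => ?_, fun l hl => ?_⟩
  · have hbound := eventually_lt_mul_of_deriv_le (y := fun t => -y t) (neg_lt_neg hl)
      (hy.mono fun t ht => ht.neg)
      ((hlower l hl).mono fun t ht hyt => neg_le_neg (ht (by linarith)))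
    filter_upwards [hbound, eventually_gt_atTop 0] with t hyt ht
    rw [lt_div_iff₀ ht]
    linarith
  · filter_upwards [eventually_lt_mul_of_deriv_le hl hy (hupper l hl), eventually_gt_atTop 0]
      with t hyt ht
    rwa [div_lt_iff₀ ht]

theorem exists_tendsto_atTop_of_hasDerivAt_nonpos {V V' : ℝ → ℝ} {b : ℝ}
    (hV : ∀ᶠ t in atTop, HasDerivAt V (V' t) t) (hV' : ∀ᶠ t in atTop, V' t ≤ 0)
    (hb : ∀ᶠ t in atTop, b ≤ V t) : ∃ l, Tendsto V atTop (𝓝 l) := by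
  obtain ⟨T, hT⟩ := eventually_atTop.1 (hV.and (hV'.and hb))
  have hanti : AntitoneOn V (Ici T) :=
    antitoneOn_of_hasDerivWithinAt_nonpos (convex_Ici T)
      (fun t ht => (hT t ht).1.continuousAt.continuousWithinAt)
      (fun t ht => (hT t (interior_subset ht)).1.hasDerivWithinAt)
      (fun t ht => (hT t (interior_subset ht)).2.1)
  have hbdd : BddBelow (range fun t : Ici T => V t) :=
    ⟨b, forall_mem_range.2 fun t => (hT t t.2).2.2⟩
  exact ⟨_, tendsto_comp_val_Ici_atTop.1
    (tendsto_atTop_ciInf (fun s t hst => hanti s.2 t.2 hst) hbdd)⟩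

theorem continuousAt_of_strictAntiOn_leftInverse {α β : Type*} [LinearOrder α] [TopologicalSpace α]
    [OrderTopology α] [DenselyOrdered α] [LinearOrder β] [TopologicalSpace β] [OrderTopology β]
    {F : α → β} {G : β → α} {s : Set α} {t : β} (hF : StrictAntiOn F s) (hs : s ∈ 𝓝 (G t))
    (hG : ∀ᶠ r in 𝓝 t, G r ∈ s ∧ F (G r) = r) : ContinuousAt G t := by
  obtain ⟨hGt, hFt⟩ := hG.self_of_nhds
  refine tendsto_order.2 ⟨fun b hb => ?_, fun b hb => ?_⟩
  · have := nhdsLT_neBot_of_exists_lt ⟨b, hb⟩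
    obtain ⟨u, hus, hu⟩ := Filter.nonempty_of_mem
      (inter_mem (mem_nhdsWithin_of_mem_nhds hs) (Ioo_mem_nhdsLT hb))
    have htu : t < F u := hFt.symm.trans_lt (hF hus hGt hu.2)
    filter_upwards [hG, Iio_mem_nhds htu] with r ⟨hr, hFr⟩ hru
    exact hu.1.trans ((hF.lt_iff_gt hr hus).1 (by rwa [hFr]))
  · have := nhdsGT_neBot_of_exists_gt ⟨b, hb⟩
    obtain ⟨u, hus, hu⟩ := Filter.nonempty_of_mem
      (inter_mem (mem_nhdsWithin_of_mem_nhds hs) (Ioo_mem_nhdsGT hb))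
    have hut : F u < t := (hF hGt hus hu.1).trans_eq hFt
    filter_upwards [hG, Ioi_mem_nhds hut] with r ⟨hr, hFr⟩ hru
    exact ((hF.lt_iff_gt hus hr).1 (by rwa [hFr])).trans hu.2

theorem hasDerivAt_of_eq_intervalIntegral_left {h F : ℝ → ℝ} {s : Set ℝ} {b y : ℝ}
    (hs : IsOpen s) (hs_conn : s.OrdConnected) (hh : ContinuousOn h s) (hb : b ∈ s)
    (hF : ∀ y ∈ s, F y = ∫ u in y..b, h u) (hy : y ∈ s) : HasDerivAt F (-h y) y :=
  (intervalIntegral.integral_hasDerivAt_left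
    (hh.mono (hs_conn.uIcc_subset hy hb)).intervalIntegrable
    (hh.stronglyMeasurableAtFilter hs y hy)
    (hh.continuousAt (hs.mem_nhds hy))).congr_of_eventuallyEq
      (eventually_of_mem (hs.mem_nhds hy) hF)

end Calculus

section Balance

theorem existsUnique_one_sub_mul_rpow_neg_eq {q L : ℝ} (hq : 0 < q) (hL : 0 < L) :
    ∃! Λ, Λ ∈ Ioo (0 : ℝ) 1 ∧ (1 - Λ) * Λ ^ (-q) = L := by
  have hiff : ∀ l : ℝ, 0 < l → ((1 - l) * l ^ (-q) = L ↔ l + L * l ^ q = 1) := by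
    intro l hl
    rw [Real.rpow_neg hl.le, ← div_eq_mul_inv, div_eq_iff (Real.rpow_pos_of_pos hl q).ne']
    constructor <;> intro h <;> linarith
  have hmono : StrictMonoOn (fun l : ℝ => l + L * l ^ q) (Ici 0) := fun a ha b _ hab =>
    add_lt_add hab (mul_lt_mul_of_pos_left (Real.rpow_lt_rpow ha hab hq) hL)
  have hcont : Continuous fun l : ℝ => l + L * l ^ q :=
    continuous_id.add (continuous_const.mul (Real.continuous_rpow_const hq.le))
  obtain ⟨Λ, hΛ, hroot⟩ : (1 : ℝ) ∈ (fun l : ℝ => l + L * l ^ q) '' Ioo 0 1 :=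
    intermediate_value_Ioo zero_le_one hcont.continuousOn (by simp [Real.zero_rpow hq.ne', hL])
  refine ⟨Λ, ⟨hΛ, (hiff Λ hΛ.1).2 hroot⟩, fun Λ' ⟨hΛ', h⟩ => ?_⟩
  exact hmono.injOn hΛ'.1.le hΛ.1.le (((hiff Λ' hΛ'.1).1 h).trans hroot.symm)

theorem exists_rpow_one_sub_eq {β Λ : ℝ} (hβ : β ≠ 1) (hΛ : 0 < Λ) :
    ∃ μ, 0 < μ ∧ μ ^ (1 - β) = Λ ∧ μ ^ β = Λ ^ (-β / (β - 1)) := by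
  have hβ' : β - 1 ≠ 0 := sub_ne_zero.2 hβ
  refine ⟨Λ ^ (-1 / (β - 1)), Real.rpow_pos_of_pos hΛ _, ?_, ?_⟩
  · rw [← Real.rpow_mul hΛ.le, show -1 / (β - 1) * (1 - β) = 1 by field_simp; ring, Real.rpow_one]
  · rw [← Real.rpow_mul hΛ.le, div_mul_eq_mul_div, neg_one_mul]

end Balance

section AlmostMonotone

/-- `f` is almost increasing near `0⁺`: for every `K > 1`, `f u ≤ K * f v` whenever `0 < u ≤ v` and
`v` is small. This is the consequence of Condition (M) that the comparison arguments rely on. -/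
def AlmostMonotoneAt0 (f : ℝ → ℝ) : Prop :=
  ∀ K : ℝ, 1 < K → ∀ᶠ v in 𝓝[>] 0, ∀ u ∈ Ioc 0 v, f u ≤ K * f v

namespace AlmostMonotoneAt0

theorem of_tendsto_div_monotoneOn {f φ : ℝ → ℝ} {δ : ℝ} (hδ : 0 < δ)
    (hf_pos : ∀ y, 0 < y → 0 < f y) (hφ : MonotoneOn φ (Ioo 0 δ))
    (h : Tendsto (fun y => f y / φ y) (𝓝[>] 0) (𝓝 1)) : AlmostMonotoneAt0 f := by
  intro K hK
  have hr : 1 < √K := Real.lt_sqrt_of_sq_lt (by rwa [one_pow])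
  have hr₀ : 0 < √K := one_pos.trans hr
  have hcomparable : ∀ᶠ y in 𝓝[>] 0, f y ≤ √K * φ y ∧ φ y ≤ √K * f y := by
    filter_upwards [h.eventually_lt_const hr, h.eventually_const_lt (inv_lt_one_of_one_lt₀ hr),
      self_mem_nhdsWithin] with y hlt hgt hy
    have hφy : 0 < φ y :=
      (div_pos_iff_of_pos_left (hf_pos y hy)).1 ((inv_pos.2 hr₀).trans hgt)
    rw [div_lt_iff₀ hφy] at hlt
    rw [lt_div_iff₀ hφy, inv_mul_lt_iff₀ hr₀] at hgt
    exact ⟨hlt.le, hgt.le⟩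
  obtain ⟨d, hd, hcomparable⟩ := mem_nhdsGT_iff_exists_Ioo_subset.1 hcomparable
  filter_upwards [Ioo_mem_nhdsGT hd, Ioo_mem_nhdsGT hδ] with v hvd hvδ u ⟨hu, huv⟩
  calc f u ≤ √K * φ u := (hcomparable ⟨hu, huv.trans_lt hvd.2⟩).1
    _ ≤ √K * φ v := by gcongr; exact hφ ⟨hu, huv.trans_lt hvδ.2⟩ hvδ huv
    _ ≤ √K * (√K * f v) := by gcongr; exact (hcomparable hvd).2
    _ = K * f v := by rw [← mul_assoc, Real.mul_self_sqrt (one_pos.trans hK).le]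

variable {ι : Type*} {𝓕 : Filter ι} {f : ℝ → ℝ} {g u v : ι → ℝ} {r c : ℝ}

theorem eventually_div_le_mul_div (hf : AlmostMonotoneAt0 f) (hf_pos : ∀ y, 0 < y → 0 < f y)
    (hg : ∀ᶠ i in 𝓕, 0 ≤ g i) (hu : ∀ᶠ i in 𝓕, 0 < u i) (hv : Tendsto v 𝓕 (𝓝[>] 0))
    {K : ℝ} (hK : 1 < K) :
    ∀ᶠ i in 𝓕, u i ≤ v i → g i / f (v i) ≤ K * (g i / f (u i)) := by
  filter_upwards [hg, hu, hv.eventually self_mem_nhdsWithin, hv.eventually (hf K hK)]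
    with i hgi hui hvi hmono huv
  rw [← mul_div_assoc, div_le_div_iff₀ (hf_pos _ hvi) (hf_pos _ hui)]
  calc g i * f (u i) ≤ g i * (K * f (v i)) :=
        mul_le_mul_of_nonneg_left (hmono _ ⟨hui, huv⟩) hgi
    _ = K * g i * f (v i) := by ring

theorem eventually_div_lt (hf : AlmostMonotoneAt0 f) (hf_pos : ∀ y, 0 < y → 0 < f y)
    (hg : ∀ᶠ i in 𝓕, 0 ≤ g i) (hu : ∀ᶠ i in 𝓕, 0 < u i) (hv : Tendsto v 𝓕 (𝓝[>] 0))
    (hr : Tendsto (fun i => g i / f (u i)) 𝓕 (𝓝 r)) (hrc : r < c) :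
    ∀ᶠ i in 𝓕, u i ≤ v i → g i / f (v i) < c := by
  obtain ⟨K, hK, hKc⟩ := exists_one_lt_mul_lt hrc
  filter_upwards [hf.eventually_div_le_mul_div hf_pos hg hu hv hK,
    (hr.const_mul K).eventually_lt_const hKc] with i hle hlt huv
  exact (hle huv).trans_lt hlt

theorem eventually_lt_div (hf : AlmostMonotoneAt0 f) (hf_pos : ∀ y, 0 < y → 0 < f y)
    (hg : ∀ᶠ i in 𝓕, 0 ≤ g i) (hu : ∀ᶠ i in 𝓕, 0 < u i) (hv : Tendsto v 𝓕 (𝓝[>] 0))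
    (hr : Tendsto (fun i => g i / f (v i)) 𝓕 (𝓝 r)) (hcr : c < r) :
    ∀ᶠ i in 𝓕, u i ≤ v i → c < g i / f (u i) := by
  obtain ⟨K, hK, hKr⟩ := exists_one_lt_mul_lt hcr
  filter_upwards [hf.eventually_div_le_mul_div hf_pos hg hu hv hK,
    hr.eventually_const_lt hKr] with i hle hlt huv
  exact lt_of_mul_lt_mul_left (hlt.trans_le (hle huv)) (one_pos.trans hK).le

end AlmostMonotoneAt0

end AlmostMonotone

section RegularVariation

namespace RVat0

theorem of_hasDerivAt_neg_one_div {f F : ℝ → ℝ} {β : ℝ} (hf : RVat0 f β)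
    (hf_ne : ∀ y, 0 < y → f y ≠ 0) (hF : ∀ y, 0 < y → HasDerivAt F (-(1 / f y)) y)
    (hF_top : Tendsto F (𝓝[>] 0) atTop) : RVat0 F (1 - β) := by
  intro m hm
  have hF_mul : ∀ y, 0 < y → HasDerivAt (fun y => F (m * y)) (-(1 / f (m * y)) * (m * 1)) y :=
    fun y hy => (hF (m * y) (mul_pos hm hy)).comp y ((hasDerivAt_id y).const_mul m)
  refine lhopital_infty_nhdsGT (eventually_mem_nhdsWithin.mono hF_mul)
    (eventually_mem_nhdsWithin.mono hF)
    (eventually_mem_nhdsWithin.mono fun y hy => neg_ne_zero.2 (one_div_ne_zero (hf_ne y hy)))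
    (tendsto_abs_atTop_atTop.comp hF_top) ?_
  have hlim := ((hf m hm).inv₀ (Real.rpow_pos_of_pos hm β).ne').const_mul m
  have hexp : m * (m ^ β)⁻¹ = m ^ (1 - β) := by
    rw [Real.rpow_sub hm, Real.rpow_one, div_eq_mul_inv]
  rw [hexp] at hlim
  refine hlim.congr' ?_
  filter_upwards [self_mem_nhdsWithin] with y hy
  have hfy := hf_ne y hy
  have hfmy := hf_ne (m * y) (mul_pos hm hy)
  field_simp

variable {ι : Type*} {𝓕 : Filter ι} {a : ι → ℝ}

theorem tendsto_div_comp_const_mul {f : ℝ → ℝ} {β L m : ℝ} {g : ι → ℝ} (hf : RVat0 f β)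
    (hf_ne : ∀ y, 0 < y → f y ≠ 0) (ha : Tendsto a 𝓕 (𝓝[>] 0))
    (hg : Tendsto (fun i => g i / f (a i)) 𝓕 (𝓝 L)) (hm : 0 < m) :
    Tendsto (fun i => g i / f (m * a i)) 𝓕 (𝓝 (L / m ^ β)) := by
  refine (hg.div ((hf m hm).comp ha) (Real.rpow_pos_of_pos hm β).ne').congr' ?_
  filter_upwards [ha.eventually self_mem_nhdsWithin] with i hi
  exact div_div_div_cancel_right₀ (hf_ne _ hi) _ _

variable {F : ℝ → ℝ} {x τ : ι → ℝ} {α l m : ℝ}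

theorem eventually_le_const_mul_of_mul_le (hF : RVat0 F α) (hF_anti : StrictAntiOn F (Ioi 0))
    (ha : Tendsto a 𝓕 (𝓝[>] 0)) (haF : ∀ᶠ i in 𝓕, F (a i) = τ i) (hτ : ∀ᶠ i in 𝓕, 0 < τ i)
    (hx : ∀ᶠ i in 𝓕, 0 < x i) (hm : 0 < m) (hml : m ^ α < l) :
    ∀ᶠ i in 𝓕, l * τ i ≤ F (x i) → x i ≤ m * a i := by
  filter_upwards [ha.eventually self_mem_nhdsWithin, haF, hτ, hx,
    ((hF m hm).comp ha).eventually_lt_const hml] with i hai haF hτ hxi hlt hle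
  rw [Function.comp_apply, haF, div_lt_iff₀ hτ] at hlt
  exact (hF_anti.lt_iff_gt (mul_pos hm hai) hxi).1 (hlt.trans_le hle) |>.le

theorem eventually_const_mul_le_of_le_mul (hF : RVat0 F α) (hF_anti : StrictAntiOn F (Ioi 0))
    (ha : Tendsto a 𝓕 (𝓝[>] 0)) (haF : ∀ᶠ i in 𝓕, F (a i) = τ i) (hτ : ∀ᶠ i in 𝓕, 0 < τ i)
    (hx : ∀ᶠ i in 𝓕, 0 < x i) (hm : 0 < m) (hml : l < m ^ α) :
    ∀ᶠ i in 𝓕, F (x i) ≤ l * τ i → m * a i ≤ x i := by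
  filter_upwards [ha.eventually self_mem_nhdsWithin, haF, hτ, hx,
    ((hF m hm).comp ha).eventually_const_lt hml] with i hai haF hτ hxi hlt hle
  rw [Function.comp_apply, haF, lt_div_iff₀ hτ] at hlt
  exact (hF_anti.lt_iff_gt hxi (mul_pos hm hai)).1 (hle.trans_lt hlt) |>.le

end RVat0

end RegularVariation

section Solutions

variable {f g F : ℝ → ℝ} {x a : ℝ → ℝ}

theorem IsSol.pos {ξ : ℝ} (hx : IsSol f g ξ x) (hf_zero : f 0 = 0)
    (hg_pos : ∀ t, 0 < t → 0 < g t) (hξ : 0 < ξ) {t : ℝ} (ht : 0 ≤ t) : 0 < x t := by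
  obtain ⟨hx_cont, hx₀, hx'⟩ := hx
  refine pos_of_hasDerivAt_pos_of_eq_zero ht (hx_cont.mono Icc_subset_Ici_self)
    (fun s hs => hx' s hs.1) (hx₀ ▸ hξ) fun s hs hxs => ?_
  rw [hxs, hf_zero, neg_zero, zero_add]
  exact hg_pos s hs.1

theorem hasDerivAt_rightInverse_of_neg_one_div (hf_ne : ∀ y, 0 < y → f y ≠ 0)
    (hF : ∀ y, 0 < y → HasDerivAt F (-(1 / f y)) y) (hF_anti : StrictAntiOn F (Ioi 0)) {t : ℝ}
    (ha : ∀ᶠ r in 𝓝 t, 0 < a r ∧ F (a r) = r) : HasDerivAt a (-f (a t)) t := by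
  have hat := ha.self_of_nhds.1
  have hinv := (hF _ hat).of_local_left_inverse
    (continuousAt_of_strictAntiOn_leftInverse hF_anti (Ioi_mem_nhds hat) ha)
    (neg_ne_zero.2 (one_div_ne_zero (hf_ne _ hat))) (ha.mono fun r hr => hr.2)
  rwa [inv_neg, one_div, inv_inv] at hinv

theorem hasDerivAt_comp_of_neg_one_div {t : ℝ} (hf_ne : f (x t) ≠ 0)
    (hF : HasDerivAt F (-(1 / f (x t))) (x t)) (hx : HasDerivAt x (-f (x t) + g t) t) :
    HasDerivAt (fun s => F (x s)) (1 - g t / f (x t)) t := by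
  have hslope : -(1 / f (x t)) * (-f (x t) + g t) = 1 - g t / f (x t) := by
    field_simp
    ring
  exact hslope ▸ hF.comp t hx

-- If `g ≤ C f(a)`, then `x + C a` decreases, since `a' = -f(a)`.
theorem exists_tendsto_of_perturbation_isBigO
    (hf_pos : ∀ y, 0 < y → 0 < f y) (ha : Tendsto a atTop (𝓝[>] 0))
    (ha' : ∀ᶠ t in atTop, HasDerivAt a (-f (a t)) t) (hx_pos : ∀ᶠ t in atTop, 0 < x t)
    (hx' : ∀ᶠ t in atTop, HasDerivAt x (-f (x t) + g t) t)
    (hg : g =O[atTop] fun t => f (a t)) : ∃ l, Tendsto x atTop (𝓝 l) := by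
  obtain ⟨C, hC, hgC⟩ := hg.exists_pos
  have ha_pos := ha.eventually eventually_mem_nhdsWithin
  obtain ⟨l, hl⟩ : ∃ l, Tendsto (fun t => x t + C * a t) atTop (𝓝 l) := by
    refine exists_tendsto_atTop_of_hasDerivAt_nonpos (b := 0)
      (hx'.and ha' |>.mono fun t ht => ht.1.add (ht.2.const_mul C)) ?_ ?_
    · filter_upwards [hgC.bound, hx_pos, ha_pos] with t hgt hxt hat
      rw [Real.norm_eq_abs, Real.norm_of_nonneg (hf_pos _ hat).le] at hgt
      linarith [le_abs_self (g t), hf_pos _ hxt]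
    · filter_upwards [hx_pos, ha_pos] with t hxt hat
      exact (add_pos hxt (mul_pos hC hat)).le
  exact ⟨l - C * 0, (hl.sub ((tendsto_nhds_of_tendsto_nhdsWithin ha).const_mul C)).congr
    fun t => add_sub_cancel_right _ _⟩

theorem tendsto_zero_of_perturbation_isBigO (hf_cont : ContinuousOn f (Ici 0)) (hf_zero : f 0 = 0)
    (hf_pos : ∀ y, 0 < y → 0 < f y) (ha : Tendsto a atTop (𝓝[>] 0))
    (ha' : ∀ᶠ t in atTop, HasDerivAt a (-f (a t)) t) (hx_pos : ∀ᶠ t in atTop, 0 < x t)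
    (hx' : ∀ᶠ t in atTop, HasDerivAt x (-f (x t) + g t) t)
    (hg : g =O[atTop] fun t => f (a t)) : Tendsto x atTop (𝓝 0) := by
  obtain ⟨l, hl⟩ := exists_tendsto_of_perturbation_isBigO hf_pos ha ha' hx_pos hx' hg
  have hg_zero : Tendsto g atTop (𝓝 0) := by
    have hfa := (hf_cont 0 self_mem_Ici).tendsto.comp
      (ha.mono_right (nhdsWithin_mono 0 Ioi_subset_Ici_self))
    rw [hf_zero] at hfa
    exact hg.trans_tendsto hfa
  obtain rfl | hl_pos := (ge_of_tendsto hl (hx_pos.mono fun t => le_of_lt)).eq_or_lt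
  · exact hl
  have hx'_lim : Tendsto (fun t => -f (x t) + g t) atTop (𝓝 (-f l)) := by
    have hfx := (hf_cont.continuousAt (Ici_mem_nhds hl_pos)).tendsto.comp hl
    simpa only [add_zero, Function.comp_apply] using hfx.neg.add hg_zero
  have hfl := hf_pos l hl_pos
  have hx_neg := eventually_neg_of_deriv_le (half_pos hfl) hx'
    ((hx'_lim.eventually_le_const (neg_lt_neg (half_lt_self hfl))).mono fun t ht _ => ht)
  obtain ⟨t, hneg, hpos⟩ := (hx_neg.and hx_pos).exists
  exact absurd hneg hpos.not_gt

theorem tendsto_comp_div_id_of_balance {β μ : ℝ} (hβ : 0 < β) (hμ : 0 < μ)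
    (hμ_lt : μ ^ (1 - β) < 1) (hf_pos : ∀ y, 0 < y → 0 < f y) (hf : RVat0 f β)
    (hf_mono : AlmostMonotoneAt0 f) (hF' : ∀ y, 0 < y → HasDerivAt F (-(1 / f y)) y)
    (hF : RVat0 F (1 - β)) (hF_anti : StrictAntiOn F (Ioi 0)) (ha : Tendsto a atTop (𝓝[>] 0))
    (haF : ∀ᶠ t in atTop, F (a t) = t) (hx : Tendsto x atTop (𝓝[>] 0))
    (hx' : ∀ᶠ t in atTop, HasDerivAt x (-f (x t) + g t) t)
    (hg : Tendsto (fun t => g t / f (a t)) atTop (𝓝 ((1 - μ ^ (1 - β)) * μ ^ β))) :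
    Tendsto (fun t => F (x t) / t) atTop (𝓝 (μ ^ (1 - β))) := by
  have hf_ne : ∀ y, 0 < y → f y ≠ 0 := fun y hy => (hf_pos y hy).ne'
  have hx_pos := hx.eventually eventually_mem_nhdsWithin
  have ha_pos := ha.eventually eventually_mem_nhdsWithin
  have hgap : 0 < 1 - μ ^ (1 - β) := sub_pos.2 hμ_lt
  have hg_nonneg : ∀ᶠ t in atTop, 0 ≤ g t := by
    filter_upwards [hg.eventually_const_lt (mul_pos hgap (Real.rpow_pos_of_pos hμ β)), ha_pos]
      with t ht hat
    exact ((div_pos_iff_of_pos_right (hf_pos _ hat)).1 ht).le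
  have hma : ∀ m, 0 < m → Tendsto (fun t => m * a t) atTop (𝓝[>] 0) := fun m hm =>
    tendsto_nhdsWithin_iff.2 ⟨by simpa only [mul_zero] using
      (tendsto_nhds_of_tendsto_nhdsWithin ha).const_mul m, ha_pos.mono fun t ht => mul_pos hm ht⟩
  have hpow : ContinuousAt (fun m : ℝ => m ^ (1 - β)) μ :=
    Real.continuousAt_rpow_const μ _ (Or.inl hμ.ne')
  refine tendsto_div_id_of_deriv_feedback
    (hx'.and hx_pos |>.mono fun t ht =>
      hasDerivAt_comp_of_neg_one_div (hf_ne _ ht.2) (hF' _ ht.2) ht.1)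
    (fun l hl => ?_) (fun l hl => ?_)
  · obtain ⟨m, hml, hm, hmμ⟩ := ((hpow.eventually_lt_const hl).filter_mono nhdsWithin_le_nhds
      |>.and (Ioo_mem_nhdsLT hμ)).exists
    have hgap_lt : 1 - μ ^ (1 - β) < (1 - μ ^ (1 - β)) * μ ^ β / m ^ β := by
      rw [lt_div_iff₀ (Real.rpow_pos_of_pos hm β)]
      exact mul_lt_mul_of_pos_left (Real.rpow_lt_rpow hm.le hmμ hβ) hgap
    filter_upwards [hF.eventually_le_const_mul_of_mul_le hF_anti ha haF (eventually_gt_atTop 0)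
        hx_pos hm hml,
      hf_mono.eventually_lt_div hf_pos hg_nonneg hx_pos (hma m hm)
        (hf.tendsto_div_comp_const_mul hf_ne ha hg hm) hgap_lt] with t hxa hlt hle
    linarith [hlt (hxa hle)]
  · obtain ⟨m, hml, hμm⟩ := ((hpow.eventually_const_lt hl).filter_mono nhdsWithin_le_nhds
      |>.and (self_mem_nhdsWithin (s := Ioi μ))).exists
    have hm : 0 < m := hμ.trans hμm
    have hgap_lt : (1 - μ ^ (1 - β)) * μ ^ β / m ^ β < 1 - μ ^ (1 - β) := by
      rw [div_lt_iff₀ (Real.rpow_pos_of_pos hm β)]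
      exact mul_lt_mul_of_pos_left (Real.rpow_lt_rpow hμ.le hμm hβ) hgap
    filter_upwards [hF.eventually_const_mul_le_of_le_mul hF_anti ha haF (eventually_gt_atTop 0)
        hx_pos hm hml,
      hf_mono.eventually_div_lt hf_pos hg_nonneg ((hma m hm).eventually self_mem_nhdsWithin) hx
        (hf.tendsto_div_comp_const_mul hf_ne ha hg hm) hgap_lt] with t hxa hlt hle
    linarith [hlt (hxa hle)]

end Solutions

theorem stmt_2_general {f g F Finv : ℝ → ℝ} {ξ : ℝ} {x : ℝ → ℝ}
    (hf_cont : ContinuousOn f (Ici 0)) (hf_pos : ∀ y, 0 < y → 0 < f y) (hf_zero : f 0 = 0)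
    (hg_pos : ∀ t, 0 < t → 0 < g t) (hF : ∀ y, 0 < y → F y = ∫ u in y..(1 : ℝ), 1 / f u)
    (hF_top : Tendsto F (𝓝[>] 0) atTop) (hF_anti : StrictAntiOn F (Ioi 0))
    (hFinv : ∀ t, 0 ≤ t → 0 < Finv t ∧ F (Finv t) = t) (hFinv_to0 : Tendsto Finv atTop (𝓝 0))
    (hξ : 0 < ξ) (hx : IsSol f g ξ x)
    (hM : ∃ δ, 0 < δ ∧ ∃ φ : ℝ → ℝ, MonotoneOn φ (Ioo 0 δ) ∧
      Tendsto (fun y => f y / φ y) (𝓝[>] 0) (𝓝 1))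
    {β : ℝ} (hβ : 1 < β) (hfRV : RVat0 f β) {L : ℝ} (hLpos : 0 < L)
    (hL : Tendsto (fun t => g t / f (Finv t)) atTop (𝓝 L)) :
    Tendsto x atTop (𝓝 0) ∧
    ∃ Λ : ℝ, Λ ∈ Ioo (0 : ℝ) 1 ∧ (1 - Λ) * Λ ^ (-β / (β - 1)) = L ∧
      (∀ Λ' ∈ Ioo (0 : ℝ) 1, (1 - Λ') * Λ' ^ (-β / (β - 1)) = L → Λ' = Λ) ∧
      Tendsto (fun t => F (x t) / t) atTop (𝓝 Λ) := by
  have hf_ne : ∀ y, 0 < y → f y ≠ 0 := fun y hy => (hf_pos y hy).ne'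
  have hF' : ∀ y, 0 < y → HasDerivAt F (-(1 / f y)) y := fun y hy =>
    hasDerivAt_of_eq_intervalIntegral_left isOpen_Ioi ordConnected_Ioi
      (continuousOn_const.div (hf_cont.mono Ioi_subset_Ici_self) hf_ne)
      (mem_Ioi.2 one_pos) hF hy
  have hFinv' : ∀ᶠ t in atTop, HasDerivAt Finv (-f (Finv t)) t :=
    (eventually_gt_atTop 0).mono fun t ht => hasDerivAt_rightInverse_of_neg_one_div hf_ne hF'
      hF_anti ((eventually_gt_nhds ht).mono fun r hr => hFinv r hr.le)
  have hFinv_right : ∀ᶠ t in atTop, 0 < Finv t ∧ F (Finv t) = t :=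
    (eventually_ge_atTop 0).mono hFinv
  have ha : Tendsto Finv atTop (𝓝[>] 0) :=
    tendsto_nhdsWithin_iff.2 ⟨hFinv_to0, hFinv_right.mono fun t => And.left⟩
  have hx_pos : ∀ᶠ t in atTop, 0 < x t :=
    (eventually_ge_atTop 0).mono fun t ht => hx.pos hf_zero hg_pos hξ ht
  have hx' := (eventually_gt_atTop 0).mono hx.2.2
  have hx₀ : Tendsto x atTop (𝓝 0) :=
    tendsto_zero_of_perturbation_isBigO hf_cont hf_zero hf_pos ha hFinv' hx_pos hx'
      (Asymptotics.isBigO_of_div_tendsto_nhds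
        (hFinv_right.mono fun t ht h => absurd h (hf_ne _ ht.1)) L hL)
  obtain ⟨δ, hδ, φ, hφ, hfφ⟩ := hM
  obtain ⟨Λ, ⟨hΛ, hΛL⟩, hΛ_unique⟩ := existsUnique_one_sub_mul_rpow_neg_eq
    (div_pos (one_pos.trans hβ) (sub_pos.2 hβ)) hLpos
  rw [← neg_div] at hΛL hΛ_unique
  refine ⟨hx₀, Λ, hΛ, hΛL, fun Λ' h h' => hΛ_unique Λ' ⟨h, h'⟩, ?_⟩
  obtain ⟨μ, hμ, rfl, hμβ⟩ := exists_rpow_one_sub_eq hβ.ne' hΛ.1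
  rw [← hΛL, ← hμβ] at hL
  exact tendsto_comp_div_id_of_balance (one_pos.trans hβ) hμ hΛ.2 hf_pos hfRV
    (.of_tendsto_div_monotoneOn hδ hf_pos hφ hfφ) hF'
    (hfRV.of_hasDerivAt_neg_one_div hf_ne hF' hF_top) hF_anti ha
    (hFinv_right.mono fun t => And.right) (tendsto_nhdsWithin_iff.2 ⟨hx₀, hx_pos⟩) hx' hL

/-- Theorem 2.3(i) (Theorem `FxtLambda`, part (i)): under the base hypotheses and
Condition (M), if `f ∈ RV₀(β)` with `β > 1` and `g(t)/(f∘F⁻¹)(t) → L > 0`, then the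
solution of `x' = -f(x) + g`, `x(0) = ξ > 0`, obeys `x(t) → 0` and `F(x(t))/t → Λ*`,
where `Λ* ∈ (0,1)` is the unique solution of `(1 - Λ*)·Λ*^(-β/(β-1)) = L`. -/
theorem stmt_2
    (f g F Finv : ℝ → ℝ) (ξ : ℝ) (x : ℝ → ℝ)
    (hf_cont : Continuous f) (hf_lip : LocallyLipschitz f)
    (hf_sign : ∀ y : ℝ, y ≠ 0 → 0 < y * f y) (hf_zero : f 0 = 0)
    (hg_cont : ContinuousOn g (Set.Ici 0)) (hg_pos : ∀ t : ℝ, 0 < t → 0 < g t)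
    (hF : ∀ y : ℝ, 0 < y → F y = ∫ u in y..(1:ℝ), 1 / f u)
    (hF_top : Tendsto F (nhdsWithin 0 (Set.Ioi 0)) atTop)
    (hF_anti : StrictAntiOn F (Set.Ioi 0))
    (hFinv : ∀ t : ℝ, 0 ≤ t → 0 < Finv t ∧ F (Finv t) = t)
    (hFinv_to0 : Tendsto Finv atTop (nhds 0))
    (hξ : 0 < ξ) (hx : IsSol f g ξ x)
    (hM : ∃ δ : ℝ, 0 < δ ∧ ∃ φ : ℝ → ℝ, StrictMonoOn φ (Set.Ioo 0 δ) ∧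
      Tendsto (fun y => f y / φ y) (nhdsWithin 0 (Set.Ioi 0)) (nhds 1))
    (β : ℝ) (hβ : 1 < β) (hfRV : RVat0 f β)
    (L : ℝ) (hLpos : 0 < L)
    (hL : Tendsto (fun t => g t / f (Finv t)) atTop (nhds L)) :
    Tendsto x atTop (nhds 0) ∧
    ∃ Λ : ℝ, Λ ∈ Set.Ioo (0:ℝ) 1 ∧ (1 - Λ) * Λ ^ (-β / (β - 1)) = L ∧
      (∀ Λ' ∈ Set.Ioo (0:ℝ) 1, (1 - Λ') * Λ' ^ (-β / (β - 1)) = L → Λ' = Λ) ∧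
      Tendsto (fun t => F (x t) / t) atTop (nhds Λ) := by
  obtain ⟨δ, hδ, φ, hφ, hfφ⟩ := hM
  exact stmt_2_general hf_cont.continuousOn
    (fun y hy => pos_of_mul_pos_right (hf_sign y hy.ne') hy.le) hf_zero hg_pos hF hF_top hF_anti
    hFinv hFinv_to0 hξ hx ⟨δ, hδ, φ, hφ.monotoneOn, hfφ⟩ hβ hfRV hLpos hL
end
end

section
/- Assume the base hypotheses and Condition (M). Suppose that either f ∈ RV₀(β) for some β > 1 or f∘F⁻¹ ∈ RV_∞(-1), that the unique continuous solution x of x'(t) = -f(x(t)) + g(t), x(0) = ξ > 0, satisfies x(t) → 0 as t → ∞, and that lim_{t→∞} g(t)/(f∘F⁻¹)(t) = L ∈ [0,∞]. Then: (i) if L = 0, lim_{t→∞} F(x(t))/t = 1; (ii) if L ∈ (0,∞), lim_{t→∞} F(x(t))/t = Λ* ∈ (0,1), where Λ* is the unique solution of (1 - Λ*)·Λ*^{-β/(β-1)} = L when f ∈ RV₀(β) with β > 1, and Λ* = 1/(1+L) when f∘F⁻¹ ∈ RV_∞(-1); (iii) if L = ∞, lim_{t→∞} F(x(t))/t = 0.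 -/
open Filter Real Set Topology MeasureTheory

noncomputable section

/-!
Put `u = F ∘ x` and `h = f ∘ F⁻¹`. Since `F' = -1/f`, the equation becomes `u' = 1 - g / h(u)`, so
a limit `Λ` of `u(t)/t` should satisfy `Λ = 1 - L Λ^γ`, where `-γ` is the index of `h`. To prove
it, compare `u` with the lines `c t`: as `h` is asymptotically decreasing, `g / h(u)` lies above or
below `g(t) / h(c t) → L c^γ`, asymptotically, as soon as `u` lies above or below `c t`. Hence
`u' - c` is bounded away from `0` with the sign that drives `u` back to the line, if `c > Λ` while
`u` is above it, and if `c < Λ` while `u` is below it.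

For `f ∈ RV₀(β)`, L'Hôpital's rule gives `F ∈ RV₀(1 - β)`; inverting, `F⁻¹ ∈ RV_∞(-1/(β - 1))`, and
composing with the asymptotically increasing `f` yields `h ∈ RV_∞(-β/(β - 1))`.
-/

open Asymptotics

/-- Condition (M): near `0⁺`, `f` is asymptotic to a function that increases on some `(0, δ)`. -/
def AsymptoticallyMonotoneAtZero (f : ℝ → ℝ) : Prop :=
  ∃ δ : ℝ, 0 < δ ∧ ∃ φ : ℝ → ℝ, MonotoneOn φ (Ioo 0 δ) ∧ f ~[𝓝[>] 0] φ

/-- The counterpart of Condition (M) at infinity, which passes from `f` to `f ∘ F⁻¹`: `h` is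
asymptotic to a function that decreases near `∞`. -/
def AsymptoticallyAntitone (h : ℝ → ℝ) : Prop :=
  ∃ (T : ℝ) (ψ : ℝ → ℝ), AntitoneOn ψ (Ioi T) ∧ h ~[atTop] ψ

/-- The equation `u' = 1 - g / h(u)` near `∞` for a function `u` that tends to `∞`, with the
assumptions on its coefficients. It governs `u = F ∘ x`, with `h = f ∘ F⁻¹`. -/
structure IsRescaledSol (h g u : ℝ → ℝ) : Prop where
  hasDerivAt : ∀ᶠ t in atTop, HasDerivAt u (1 - g t / h (u t)) t
  tendsto_atTop : Tendsto u atTop atTop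
  forcing_nonneg : ∀ᶠ t in atTop, 0 ≤ g t
  coeff_pos : ∀ᶠ t in atTop, 0 < h t
  coeff_antitone : AsymptoticallyAntitone h

section Limits

variable {ι : Type*} {l : Filter ι} {a b A B : ι → ℝ} {p : ℝ}

lemma tendsto_div_of_forall_mul_le (ha : ∀ᶠ i in l, 0 ≤ a i) (hb : ∀ᶠ i in l, 0 < b i)
    (hlower : ∀ q, 0 < q → q < p → ∀ᶠ i in l, q * b i ≤ a i)
    (hupper : ∀ q, p < q → ∀ᶠ i in l, a i ≤ q * b i) :
    Tendsto (fun i => a i / b i) l (𝓝 p) := by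
  refine tendsto_order.2 ⟨fun r hr => ?_, fun r hr => ?_⟩
  · rcases lt_or_ge r 0 with hr0 | hr0
    · filter_upwards [ha, hb] with i hai hbi using hr0.trans_le (div_nonneg hai hbi.le)
    · obtain ⟨q, hrq, hqp⟩ := exists_between hr
      filter_upwards [hlower q (hr0.trans_lt hrq) hqp, hb] with i hi hbi
      exact hrq.trans_le ((le_div_iff₀ hbi).2 hi)
  · obtain ⟨q, hpq, hqr⟩ := exists_between hr
    filter_upwards [hupper q hpq, hb] with i hi hbi
    exact ((div_le_iff₀ hbi).2 hi).trans_lt hqr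

lemma exists_comparison_factor_of_isEquivalent (ha : a ~[l] A) (hb : b ~[l] B) :
    ∃ κ : ι → ℝ, Tendsto κ l (𝓝 1) ∧
      ∀ᶠ i in l, (A i ≤ B i → a i ≤ κ i * b i) ∧ (B i ≤ A i → κ i * b i ≤ a i) := by
  obtain ⟨ρ, hρ, haA⟩ := ha.exists_eq_mul
  obtain ⟨σ, hσ, hBb⟩ := hb.symm.exists_eq_mul
  refine ⟨fun i => ρ i * σ i, by simpa only [mul_one] using hρ.mul hσ, ?_⟩
  filter_upwards [haA, hBb, hρ.eventually_const_le one_pos] with i hai hBi hρi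
  simp only [Pi.mul_apply] at hai hBi ⊢
  rw [hai, mul_assoc, ← hBi]
  exact ⟨fun h => mul_le_mul_of_nonneg_left h hρi, fun h => mul_le_mul_of_nonneg_left h hρi⟩

end Limits

section DifferentialInequalities

variable {v v' w w' : ℝ → ℝ} {a c k η : ℝ}

lemma nonpos_of_hasDerivAt_neg_of_eq_zero (hv : ∀ t, a ≤ t → HasDerivAt v (v' t) t) (ha : v a ≤ 0)
    (hneg : ∀ t, a ≤ t → v t = 0 → v' t < 0) {t : ℝ} (ht : a ≤ t) : v t ≤ 0 :=
  image_le_of_deriv_right_lt_deriv_boundary (B := fun _ => 0) (B' := fun _ => 0)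
    (fun s hs => (hv s hs.1).continuousAt.continuousWithinAt)
    (fun s hs => (hv s hs.1).hasDerivWithinAt) ha (fun s => hasDerivAt_const s 0)
    (fun s hs => hneg s hs.1) (right_mem_Icc.2 ht)

lemma pos_of_hasDerivAt_pos_of_eq_zero_s7 (hv : ∀ t, a ≤ t → HasDerivAt v (v' t) t) (ha : 0 < v a)
    (hpos : ∀ t, a ≤ t → v t = 0 → 0 < v' t) {t : ℝ} (ht : a < t) : 0 < v t := by
  have hnonneg : ∀ s, a ≤ s → 0 ≤ v s := fun s hs => neg_nonpos.1 <|
    nonpos_of_hasDerivAt_neg_of_eq_zero (fun r hr => (hv r hr).neg) (neg_nonpos.2 ha.le)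
      (fun r hr h0 => neg_neg_of_pos (hpos r hr (neg_eq_zero.1 h0))) hs
  refine (hnonneg t ht.le).lt_of_ne' fun h0 => (hpos t ht.le h0).ne' ?_
  have hmin : IsLocalMin v t := by
    filter_upwards [Ioi_mem_nhds ht] with s hs
    exact h0.trans_le (hnonneg s (mem_Ioi.1 hs).le)
  exact hmin.hasDerivAt_eq_zero (hv t ht.le)

lemma exists_nonpos_of_hasDerivAt_le_neg (hη : 0 < η) (hv : ∀ t, a ≤ t → HasDerivAt v (v' t) t)
    (hneg : ∀ t, a ≤ t → 0 ≤ v t → v' t ≤ -η) : ∃ t, a ≤ t ∧ v t ≤ 0 := by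
  by_contra! hpos
  have hva : 0 < v a / η := div_pos (hpos a le_rfl) hη
  have hb : a ≤ a + v a / η := by linarith
  have hdrop : v (a + v a / η) - v a ≤ -η * (a + v a / η - a) := by
    refine (convex_Ici a).image_sub_le_mul_sub_of_deriv_le
      (fun s hs => (hv s hs).continuousAt.continuousWithinAt)
      (fun s hs => (hv s (interior_subset hs)).differentiableAt.differentiableWithinAt)
      (fun s hs => ?_) a self_mem_Ici _ hb hb
    have hs : a ≤ s := interior_subset hs
    exact (hv s hs).deriv.trans_le (hneg s hs (hpos s hs).le)
  have hcancel : -η * (a + v a / η - a) = -v a := by field_simp; ring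
  linarith [hpos _ hb]

lemma eventually_nonpos_of_hasDerivAt_le_neg (hη : 0 < η)
    (hv : ∀ᶠ t in atTop, HasDerivAt v (v' t) t)
    (hneg : ∀ᶠ t in atTop, 0 ≤ v t → v' t ≤ -η) : ∀ᶠ t in atTop, v t ≤ 0 := by
  obtain ⟨T, hT⟩ := eventually_atTop.1 (hv.and hneg)
  obtain ⟨T₁, hT₁, hvT₁⟩ := exists_nonpos_of_hasDerivAt_le_neg hη
    (fun t ht => (hT t ht).1) (fun t ht => (hT t ht).2)
  filter_upwards [eventually_ge_atTop T₁] with t ht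
  exact nonpos_of_hasDerivAt_neg_of_eq_zero (fun s hs => (hT s (hT₁.trans hs)).1) hvT₁
    (fun s hs h0 => ((hT s (hT₁.trans hs)).2 h0.ge).trans_lt (neg_neg_of_pos hη)) ht

lemma eventually_le_mul_of_hasDerivAt_le (hkc : k < c) (hv : ∀ᶠ t in atTop, HasDerivAt v (v' t) t)
    (hle : ∀ᶠ t in atTop, c * t ≤ v t → v' t ≤ k) : ∀ᶠ t in atTop, v t ≤ c * t := by
  have hnonpos : ∀ᶠ t in atTop, v t - c * t ≤ 0 := by
    refine eventually_nonpos_of_hasDerivAt_le_neg (v' := fun t => v' t - c) (sub_pos.2 hkc)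
      (hv.mono fun t ht => ht.sub (hasDerivAt_const_mul c)) ?_
    filter_upwards [hle] with t ht h0
    linarith [ht (sub_nonneg.1 h0)]
  exact hnonpos.mono fun t ht => sub_nonpos.1 ht

lemma eventually_mul_le_of_le_hasDerivAt (hck : c < k) (hv : ∀ᶠ t in atTop, HasDerivAt v (v' t) t)
    (hge : ∀ᶠ t in atTop, v t ≤ c * t → k ≤ v' t) : ∀ᶠ t in atTop, c * t ≤ v t := by
  have hneg : ∀ᶠ t in atTop, -v t ≤ -c * t := by
    refine eventually_le_mul_of_hasDerivAt_le (neg_lt_neg hck) (hv.mono fun t ht => ht.neg) ?_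
    filter_upwards [hge] with t ht hct
    linarith [ht (by linarith)]
  exact hneg.mono fun t ht => by linarith

lemma eventually_lt_mul_nhdsGT_of_mul_deriv_le (hkc : k < c)
    (hv : ∀ᶠ y in 𝓝[>] a, HasDerivAt v (v' y) y) (hw : ∀ᶠ y in 𝓝[>] a, HasDerivAt w (w' y) y)
    (hle : ∀ᶠ y in 𝓝[>] a, k * w' y ≤ v' y) (hw_top : Tendsto w (𝓝[>] a) atTop) :
    ∀ᶠ y in 𝓝[>] a, v y < c * w y := by
  obtain ⟨d, had, hd⟩ := mem_nhdsGT_iff_exists_Ioc_subset.1 (hv.and (hw.and hle))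
  have hderiv : ∀ y ∈ Ioc a d, HasDerivAt (fun y => v y - k * w y) (v' y - k * w' y) y :=
    fun y hy => (hd hy).1.sub ((hd hy).2.1.const_mul k)
  have hmono : MonotoneOn (fun y => v y - k * w y) (Ioc a d) :=
    monotoneOn_of_hasDerivWithinAt_nonneg (convex_Ioc a d)
      (fun y hy => (hderiv y hy).continuousAt.continuousWithinAt)
      (fun y hy => (hderiv y (interior_subset hy)).hasDerivWithinAt)
      (fun y hy => sub_nonneg.2 (hd (interior_subset hy)).2.2)
  filter_upwards [Ioc_mem_nhdsGT had,
    hw_top.eventually_gt_atTop ((v d - k * w d) / (c - k))] with y hy hwy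
  have hyd : v y - k * w y ≤ v d - k * w d := hmono hy (right_mem_Ioc.2 had) hy.2
  rw [div_lt_iff₀ (sub_pos.2 hkc)] at hwy
  linarith

-- L'Hôpital's rule in the form `∞/∞`; Mathlib has the form `0/0`.
lemma lhopital_atTop_nhdsGT {ℓ : ℝ} (hv : ∀ᶠ y in 𝓝[>] a, HasDerivAt v (v' y) y)
    (hw : ∀ᶠ y in 𝓝[>] a, HasDerivAt w (w' y) y) (hw' : ∀ᶠ y in 𝓝[>] a, w' y < 0)
    (hw_top : Tendsto w (𝓝[>] a) atTop) (hlim : Tendsto (fun y => v' y / w' y) (𝓝[>] a) (𝓝 ℓ)) :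
    Tendsto (fun y => v y / w y) (𝓝[>] a) (𝓝 ℓ) := by
  refine tendsto_order.2 ⟨fun c hc => ?_, fun c hc => ?_⟩
  · obtain ⟨k, hck, hkℓ⟩ := exists_between hc
    have hneg : ∀ᶠ y in 𝓝[>] a, -v y < -c * w y := by
      refine eventually_lt_mul_nhdsGT_of_mul_deriv_le (neg_lt_neg hck) (hv.mono fun y hy => hy.neg)
        hw ?_ hw_top
      filter_upwards [hlim.eventually_const_lt hkℓ, hw'] with y hy hwy
      linarith [(lt_div_iff_of_neg hwy).1 hy]
    filter_upwards [hneg, hw_top.eventually_gt_atTop 0] with y hy hwy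
    rw [lt_div_iff₀ hwy]
    linarith
  · obtain ⟨k, hℓk, hkc⟩ := exists_between hc
    have hlt : ∀ᶠ y in 𝓝[>] a, v y < c * w y := by
      refine eventually_lt_mul_nhdsGT_of_mul_deriv_le hkc hv hw ?_ hw_top
      filter_upwards [hlim.eventually_lt_const hℓk, hw'] with y hy hwy
      exact ((div_lt_iff_of_neg hwy).1 hy).le
    filter_upwards [hlt, hw_top.eventually_gt_atTop 0] with y hy hwy
    exact (div_lt_iff₀ hwy).2 hy

end DifferentialInequalities

section RegularVariation

variable {f F Finv g h : ℝ → ℝ} {α β γ c p L : ℝ}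

lemma RVatInf.eventually_ne_zero (hh : RVatInf h α) : ∀ᶠ t in atTop, h t ≠ 0 := by
  have hlim := hh 1 one_pos
  rw [one_rpow] at hlim
  filter_upwards [hlim.eventually_ne one_ne_zero] with t ht h0
  simp [h0] at ht

lemma RVatInf.tendsto_div_comp_mul (hh : RVatInf h (-γ)) (hc : 0 < c)
    (hg : Tendsto (fun t => g t / h t) atTop (𝓝 L)) :
    Tendsto (fun t => g t / h (c * t)) atTop (𝓝 (L * c ^ γ)) := by
  have hlim := hg.div (hh c hc) (rpow_pos_of_pos hc _).ne'
  rw [rpow_neg hc.le, div_inv_eq_mul] at hlim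
  refine hlim.congr' (hh.eventually_ne_zero.mono fun t ht => ?_)
  simp only [Pi.div_apply, div_div_div_cancel_right₀ ht]

lemma RVatInf.tendsto_div_comp_mul_atTop (hh : RVatInf h α) (hc : 0 < c)
    (hg : Tendsto (fun t => g t / h t) atTop atTop) :
    Tendsto (fun t => g t / h (c * t)) atTop atTop := by
  have hcα : 0 < c ^ α := rpow_pos_of_pos hc α
  refine (hg.atTop_mul_pos (inv_pos.2 hcα) ((hh c hc).inv₀ hcα.ne')).congr'
    (hh.eventually_ne_zero.mono fun t ht => ?_)
  rw [← div_eq_mul_inv, div_div_div_cancel_right₀ ht]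

lemma RVat0.of_hasDerivAt_neg_one_div_s7 (hf : RVat0 f β) (hf_pos : ∀ y, 0 < y → 0 < f y)
    (hF' : ∀ y, 0 < y → HasDerivAt F (-(1 / f y)) y) (hF_top : Tendsto F (𝓝[>] 0) atTop) :
    RVat0 F (1 - β) := by
  intro μ hμ
  refine lhopital_atTop_nhdsGT (v' := fun y => -(1 / f (μ * y)) * μ) (w' := fun y => -(1 / f y))
    ?_ ?_ ?_ hF_top ?_
  · filter_upwards [self_mem_nhdsWithin] with y hy
    exact (hF' (μ * y) (mul_pos hμ hy)).comp y (hasDerivAt_const_mul μ)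
  · filter_upwards [self_mem_nhdsWithin] with y hy using hF' y hy
  · filter_upwards [self_mem_nhdsWithin] with y hy
    exact neg_neg_of_pos (one_div_pos.2 (hf_pos y hy))
  · have hlim := ((hf μ hμ).inv₀ (rpow_pos_of_pos hμ β).ne').const_mul μ
    rw [rpow_sub hμ, rpow_one, div_eq_mul_inv]
    refine hlim.congr' ?_
    filter_upwards [self_mem_nhdsWithin] with y hy
    have := hf_pos y hy
    field_simp

lemma strictAntiOn_of_rightInvOn {s t : Set ℝ} (hF : StrictAntiOn F s) (hmaps : MapsTo Finv t s)
    (hinv : RightInvOn Finv F t) : StrictAntiOn Finv t := fun a ha b hb hab => by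
  rwa [← hF.lt_iff_gt (hmaps ha) (hmaps hb), hinv ha, hinv hb]

lemma RVat0.rVatInf_of_eventually_rightInverse (hα : α < 0) (hF : RVat0 F α)
    (hF_anti : StrictAntiOn F (Ioi 0)) (hinv : ∀ᶠ t in atTop, F (Finv t) = t)
    (hFinv0 : Tendsto Finv atTop (𝓝[>] 0)) : RVatInf Finv α⁻¹ := by
  intro lam hlam
  have hmul : Tendsto (fun t => lam * t) atTop atTop := tendsto_id.const_mul_atTop hlam
  have hpos : ∀ᶠ t in atTop, 0 < Finv t := hFinv0.eventually self_mem_nhdsWithin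
  have hp : 0 < lam ^ α⁻¹ := rpow_pos_of_pos hlam _
  refine tendsto_div_of_forall_mul_le (hmul.eventually (hpos.mono fun _ => le_of_lt)) hpos ?_ ?_
  · intro q hq0 hq
    have hlt : lam < q ^ α := (lt_rpow_inv_iff_of_neg hq0 hlam hα).1 hq
    filter_upwards [hFinv0.eventually ((hF q hq0).eventually_const_lt hlt), hpos,
      hmul.eventually hpos, hinv, hmul.eventually hinv, eventually_gt_atTop 0]
      with t hratio ht hlt hFt hFlt ht0
    rw [hFt, lt_div_iff₀ ht0, ← hFlt, hF_anti.lt_iff_gt hlt (mul_pos hq0 ht)] at hratio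
    exact hratio.le
  · intro q hq
    have hq0 : 0 < q := hp.trans hq
    have hlt : q ^ α < lam := (rpow_inv_lt_iff_of_neg hlam hq0 hα).1 hq
    filter_upwards [hFinv0.eventually ((hF q hq0).eventually_lt_const hlt), hpos,
      hmul.eventually hpos, hinv, hmul.eventually hinv, eventually_gt_atTop 0]
      with t hratio ht hlt hFt hFlt ht0
    rw [hFt, div_lt_iff₀ ht0, ← hFlt, hF_anti.lt_iff_gt (mul_pos hq0 ht) hlt] at hratio
    exact hratio.le

variable {ι : Type*} {l : Filter ι} {y z : ι → ℝ}

lemma AsymptoticallyMonotoneAtZero.exists_comparison_factor (hf : AsymptoticallyMonotoneAtZero f)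
    (hy : Tendsto y l (𝓝[>] 0)) (hz : Tendsto z l (𝓝[>] 0)) :
    ∃ κ : ι → ℝ, Tendsto κ l (𝓝 1) ∧ ∀ᶠ i in l,
      (y i ≤ z i → f (y i) ≤ κ i * f (z i)) ∧ (z i ≤ y i → κ i * f (z i) ≤ f (y i)) := by
  obtain ⟨δ, hδ, φ, hφ, hfφ⟩ := hf
  obtain ⟨κ, hκ, hcmp⟩ := exists_comparison_factor_of_isEquivalent (hfφ.comp_tendsto hy)
    (hfφ.comp_tendsto hz)
  refine ⟨κ, hκ, ?_⟩
  filter_upwards [hcmp, hy.eventually (Ioo_mem_nhdsGT hδ), hz.eventually (Ioo_mem_nhdsGT hδ)]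
    with i hi hyi hzi
  exact ⟨fun h => hi.1 (hφ hyi hzi h), fun h => hi.2 (hφ hzi hyi h)⟩

lemma AsymptoticallyAntitone.exists_comparison_factor (hh : AsymptoticallyAntitone h)
    (hy : Tendsto y l atTop) (hz : Tendsto z l atTop) :
    ∃ κ : ι → ℝ, Tendsto κ l (𝓝 1) ∧ ∀ᶠ i in l,
      (y i ≤ z i → κ i * h (z i) ≤ h (y i)) ∧ (z i ≤ y i → h (y i) ≤ κ i * h (z i)) := by
  obtain ⟨T, ψ, hψ, hhψ⟩ := hh
  obtain ⟨κ, hκ, hcmp⟩ := exists_comparison_factor_of_isEquivalent (hhψ.comp_tendsto hy)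
    (hhψ.comp_tendsto hz)
  refine ⟨κ, hκ, ?_⟩
  filter_upwards [hcmp, hy.eventually_gt_atTop T, hz.eventually_gt_atTop T] with i hi hyi hzi
  exact ⟨fun h => hi.2 (hψ hyi hzi h), fun h => hi.1 (hψ hzi hyi h)⟩

lemma AsymptoticallyMonotoneAtZero.comp_antitoneOn {G : ℝ → ℝ} {a : ℝ}
    (hf : AsymptoticallyMonotoneAtZero f) (hG : AntitoneOn G (Ici a))
    (hG0 : Tendsto G atTop (𝓝[>] 0)) : AsymptoticallyAntitone (fun t => f (G t)) := by
  obtain ⟨δ, hδ, φ, hφ, hfφ⟩ := hf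
  obtain ⟨T, hT⟩ := eventually_atTop.1
    ((hG0.eventually (Ioo_mem_nhdsGT hδ)).and (eventually_ge_atTop a))
  refine ⟨T, φ ∘ G, fun r hr s hs hrs => ?_, hfφ.comp_tendsto hG0⟩
  obtain ⟨hGr, hra⟩ := hT r (le_of_lt hr)
  obtain ⟨hGs, hsa⟩ := hT s (le_of_lt hs)
  exact hφ hGs hGr (hG hra hsa hrs)

-- Monotonicity of the comparison function plays the part of the uniform convergence theorem.
lemma RVat0.tendsto_div_of_tendsto_div (hf : RVat0 f β) (hf_pos : ∀ y, 0 < y → 0 < f y)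
    (hM : AsymptoticallyMonotoneAtZero f) (hy : Tendsto y l (𝓝[>] 0)) (hz : Tendsto z l (𝓝[>] 0))
    (hp : 0 < p) (hyz : Tendsto (fun i => y i / z i) l (𝓝 p)) :
    Tendsto (fun i => f (y i) / f (z i)) l (𝓝 (p ^ β)) := by
  have hz_pos : ∀ᶠ i in l, 0 < z i := hz.eventually self_mem_nhdsWithin
  have hcompare : ∀ q, 0 < q → ∃ ρ : ι → ℝ, Tendsto ρ l (𝓝 (q ^ β)) ∧ ∀ᶠ i in l,
      (y i ≤ q * z i → f (y i) / f (z i) ≤ ρ i) ∧ (q * z i ≤ y i → ρ i ≤ f (y i) / f (z i)) := by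
    intro q hq
    have hqz : Tendsto (fun i => q * z i) l (𝓝[>] 0) := by
      simpa only [mul_zero] using TendstoNhdsWithinIoi.const_mul hq hz
    obtain ⟨κ, hκ, hcmp⟩ := hM.exists_comparison_factor hy hqz
    refine ⟨fun i => κ i * (f (q * z i) / f (z i)), ?_, ?_⟩
    · simpa only [one_mul, Function.comp_def] using hκ.mul ((hf q hq).comp hz)
    · filter_upwards [hcmp, hz_pos] with i hi hzi
      have hfz := hf_pos _ hzi
      rw [← mul_div_assoc]
      exact ⟨fun h => by gcongr; exact hi.1 h, fun h => by gcongr; exact hi.2 h⟩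
  have hrpow : Tendsto (fun q : ℝ => q ^ β) (𝓝 p) (𝓝 (p ^ β)) :=
    (continuousAt_rpow_const p β (Or.inl hp.ne')).tendsto
  refine tendsto_order.2 ⟨fun r hr => ?_, fun r hr => ?_⟩
  · obtain ⟨q, hrq, hq0, hqp⟩ := (((hrpow.mono_left nhdsWithin_le_nhds).eventually_const_lt hr).and
      (Ioo_mem_nhdsLT hp)).exists
    obtain ⟨ρ, hρ, hcmp⟩ := hcompare q hq0
    filter_upwards [hρ.eventually_const_lt hrq, hcmp, hyz.eventually_const_lt hqp, hz_pos]
      with i hrρ hi hqi hzi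
    exact hrρ.trans_le (hi.2 ((lt_div_iff₀ hzi).1 hqi).le)
  · obtain ⟨q, hqr, hpq⟩ := (((hrpow.mono_left nhdsWithin_le_nhds).eventually_lt_const hr).and
      (self_mem_nhdsWithin (s := Ioi p))).exists
    obtain ⟨ρ, hρ, hcmp⟩ := hcompare q (hp.trans hpq)
    filter_upwards [hρ.eventually_lt_const hqr, hcmp, hyz.eventually_lt_const hpq, hz_pos]
      with i hρr hi hiq hzi
    exact (hi.1 ((div_lt_iff₀ hzi).1 hiq).le).trans_lt hρr

lemma RVat0.comp_rVatInf {G : ℝ → ℝ} (hf : RVat0 f β) (hf_pos : ∀ y, 0 < y → 0 < f y)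
    (hM : AsymptoticallyMonotoneAtZero f) (hG : RVatInf G α) (hG0 : Tendsto G atTop (𝓝[>] 0)) :
    RVatInf (fun t => f (G t)) (α * β) := by
  intro lam hlam
  rw [rpow_mul hlam.le]
  exact hf.tendsto_div_of_tendsto_div hf_pos hM
    (hG0.comp (tendsto_id.const_mul_atTop hlam)) hG0 (rpow_pos_of_pos hlam α) (hG lam hlam)

lemma RVat0.rVatInf_comp_rightInverse (hβ : 1 < β) (hf : RVat0 f β) (hf_pos : ∀ y, 0 < y → 0 < f y)
    (hM : AsymptoticallyMonotoneAtZero f) (hF' : ∀ y, 0 < y → HasDerivAt F (-(1 / f y)) y)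
    (hF_top : Tendsto F (𝓝[>] 0) atTop) (hF_anti : StrictAntiOn F (Ioi 0))
    (hinv : ∀ᶠ t in atTop, F (Finv t) = t) (hFinv0 : Tendsto Finv atTop (𝓝[>] 0)) :
    RVatInf (fun t => f (Finv t)) (-(β / (β - 1))) := by
  have hF : RVat0 F (1 - β) := hf.of_hasDerivAt_neg_one_div_s7 hf_pos hF' hF_top
  have hFinv : RVatInf Finv (1 - β)⁻¹ :=
    hF.rVatInf_of_eventually_rightInverse (sub_neg.2 hβ) hF_anti hinv hFinv0
  have hindex : -(β / (β - 1)) = (1 - β)⁻¹ * β := by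
    rw [← neg_sub β 1, inv_neg]
    ring
  exact hindex ▸ hf.comp_rVatInf hf_pos hM hFinv hFinv0

end RegularVariation

namespace IsRescaledSol

variable {h g u : ℝ → ℝ} {α γ c L K Λ : ℝ}

lemma exists_comparison_factor (hu : IsRescaledSol h g u) (hc : 0 < c) :
    ∃ κ : ℝ → ℝ, Tendsto κ atTop (𝓝 1) ∧ ∀ᶠ t in atTop,
      (c * t ≤ u t → κ t * (g t / h (c * t)) ≤ g t / h (u t)) ∧
      (u t ≤ c * t → g t / h (u t) ≤ κ t * (g t / h (c * t))) := by
  have hct : Tendsto (fun t => c * t) atTop atTop := tendsto_id.const_mul_atTop hc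
  obtain ⟨κ, hκ, hcmp⟩ := hu.coeff_antitone.exists_comparison_factor hct hu.tendsto_atTop
  refine ⟨κ, hκ, ?_⟩
  filter_upwards [hcmp, hu.forcing_nonneg, hct.eventually hu.coeff_pos,
    hu.tendsto_atTop.eventually hu.coeff_pos] with t ht hg hhc hhu
  rw [← mul_div_assoc, div_le_div_iff₀ hhc hhu, div_le_div_iff₀ hhu hhc, mul_comm (κ t), mul_assoc]
  exact ⟨fun hcu => mul_le_mul_of_nonneg_left (ht.1 hcu) hg,
    fun huc => mul_le_mul_of_nonneg_left (ht.2 huc) hg⟩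

lemma eventually_le_mul (hu : IsRescaledSol h g u) (hc : 0 < c) (hKc : 1 - K < c)
    (hK : Tendsto (fun t => g t / h (c * t)) atTop (𝓝 K)) : ∀ᶠ t in atTop, u t ≤ c * t := by
  obtain ⟨κ, hκ, hcmp⟩ := hu.exists_comparison_factor hc
  obtain ⟨k, hKk, hkc⟩ := exists_between hKc
  have hlim : Tendsto (fun t => κ t * (g t / h (c * t))) atTop (𝓝 K) := by
    simpa only [one_mul] using hκ.mul hK
  refine eventually_le_mul_of_hasDerivAt_le hkc hu.hasDerivAt ?_
  filter_upwards [hcmp, hlim.eventually_const_lt (sub_lt_comm.1 hKk)] with t ht hkt hct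
  linarith [ht.1 hct]

lemma eventually_mul_le (hu : IsRescaledSol h g u) (hc : 0 < c) (hcK : c < 1 - K)
    (hK : Tendsto (fun t => g t / h (c * t)) atTop (𝓝 K)) : ∀ᶠ t in atTop, c * t ≤ u t := by
  obtain ⟨κ, hκ, hcmp⟩ := hu.exists_comparison_factor hc
  obtain ⟨k, hck, hkK⟩ := exists_between hcK
  have hlim : Tendsto (fun t => κ t * (g t / h (c * t))) atTop (𝓝 K) := by
    simpa only [one_mul] using hκ.mul hK
  refine eventually_mul_le_of_le_hasDerivAt hck hu.hasDerivAt ?_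
  filter_upwards [hcmp, hlim.eventually_lt_const (lt_sub_comm.1 hkK)] with t ht hkt hut
  linarith [ht.2 hut]

lemma eventually_le_mul_of_tendsto_atTop (hu : IsRescaledSol h g u) (hc : 0 < c)
    (hK : Tendsto (fun t => g t / h (c * t)) atTop atTop) : ∀ᶠ t in atTop, u t ≤ c * t := by
  obtain ⟨κ, hκ, hcmp⟩ := hu.exists_comparison_factor hc
  refine eventually_le_mul_of_hasDerivAt_le hc hu.hasDerivAt ?_
  filter_upwards [hcmp, (hκ.pos_mul_atTop one_pos hK).eventually_ge_atTop 1] with t ht h1t hct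
  linarith [ht.1 hct]

theorem tendsto_div_id (hu : IsRescaledSol h g u) (hγ : 0 ≤ γ) (hh : RVatInf h (-γ)) (hL : 0 ≤ L)
    (hg : Tendsto (fun t => g t / h t) atTop (𝓝 L)) (hΛ : 0 < Λ) (hfixed : 1 - L * Λ ^ γ = Λ) :
    Tendsto (fun t => u t / t) atTop (𝓝 Λ) := by
  refine tendsto_div_of_forall_mul_le (hu.tendsto_atTop.eventually_ge_atTop 0)
    (eventually_gt_atTop 0) (fun c hc hcΛ => ?_) (fun c hΛc => ?_)
  · refine hu.eventually_mul_le hc ?_ (hh.tendsto_div_comp_mul hc hg)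
    calc c < 1 - L * Λ ^ γ := hcΛ.trans_eq hfixed.symm
      _ ≤ 1 - L * c ^ γ := by gcongr
  · have hc : 0 < c := hΛ.trans hΛc
    refine hu.eventually_le_mul hc ?_ (hh.tendsto_div_comp_mul hc hg)
    calc 1 - L * c ^ γ ≤ 1 - L * Λ ^ γ := by gcongr
      _ < c := hfixed.trans_lt hΛc

theorem tendsto_div_id_zero (hu : IsRescaledSol h g u) (hh : RVatInf h α)
    (hg : Tendsto (fun t => g t / h t) atTop atTop) :
    Tendsto (fun t => u t / t) atTop (𝓝 0) :=
  tendsto_div_of_forall_mul_le (hu.tendsto_atTop.eventually_ge_atTop 0) (eventually_gt_atTop 0)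
    (fun _ hc hc' => absurd hc hc'.not_gt)
    (fun _ hc => hu.eventually_le_mul_of_tendsto_atTop hc (hh.tendsto_div_comp_mul_atTop hc hg))

end IsRescaledSol

section PerturbedEquation

variable {f g F Finv x : ℝ → ℝ} {ξ : ℝ}

lemma hasDerivAt_integral_left_of_continuousOn {E : Type*} [NormedAddCommGroup E] [NormedSpace ℝ E]
    [CompleteSpace E] {k : ℝ → E} {s : Set ℝ} {a b : ℝ} (hs : IsOpen s) [OrdConnected s]
    (hk : ContinuousOn k s) (ha : a ∈ s) (hb : b ∈ s) :
    HasDerivAt (fun y => ∫ u in y..b, k u) (-k a) a :=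
  intervalIntegral.integral_hasDerivAt_left
    (hk.mono (OrdConnected.uIcc_subset ‹_› ha hb)).intervalIntegrable
    (hk.stronglyMeasurableAtFilter hs a ha) (hk.continuousAt (hs.mem_nhds ha))

lemma hasDerivAt_of_eq_integral_one_div (hf_cont : ContinuousOn f (Ioi 0))
    (hf_pos : ∀ y, 0 < y → 0 < f y) (hF : ∀ y, 0 < y → F y = ∫ u in y..(1 : ℝ), 1 / f u) {y : ℝ}
    (hy : 0 < y) : HasDerivAt F (-(1 / f y)) y :=
  (hasDerivAt_integral_left_of_continuousOn isOpen_Ioi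
    (continuousOn_const.div hf_cont fun u hu => (hf_pos u hu).ne') hy
    (mem_Ioi.2 one_pos)).congr_of_eventuallyEq
    (eventuallyEq_of_mem (Ioi_mem_nhds hy) hF)

lemma strictAntiOn_of_hasDerivAt_neg_one_div (hf_pos : ∀ y, 0 < y → 0 < f y)
    (hF' : ∀ y, 0 < y → HasDerivAt F (-(1 / f y)) y) : StrictAntiOn F (Ioi 0) :=
  strictAntiOn_of_hasDerivWithinAt_neg (convex_Ioi 0)
    (fun y hy => (hF' y hy).continuousAt.continuousWithinAt)
    (fun y hy => (hF' y (interior_subset hy)).hasDerivWithinAt)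
    (fun y hy => neg_neg_of_pos (one_div_pos.2 (hf_pos y (interior_subset hy))))

lemma IsSol.eventually_pos (hx : IsSol f g ξ x) (hξ : 0 < ξ) (hf_zero : f 0 = 0)
    (hg_pos : ∀ t, 0 < t → 0 < g t) : ∀ᶠ t in atTop, 0 < x t := by
  obtain ⟨hx_cont, hx_init, hx_deriv⟩ := hx
  have hlim : Tendsto x (𝓝[>] 0) (𝓝 ξ) :=
    hx_init ▸ (hx_cont 0 self_mem_Ici).tendsto.mono_left (nhdsWithin_mono 0 Ioi_subset_Ici_self)
  obtain ⟨a, hxa, ha : 0 < a⟩ := ((hlim.eventually_const_lt hξ).and self_mem_nhdsWithin).exists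
  filter_upwards [eventually_gt_atTop a] with t ht
  refine pos_of_hasDerivAt_pos_of_eq_zero_s7 (fun s hs => hx_deriv s (ha.trans_le hs)) hxa
    (fun s hs h0 => ?_) ht
  simpa only [h0, hf_zero, neg_zero, zero_add] using hg_pos s (ha.trans_le hs)

lemma IsSol.isRescaledSol (hx : IsSol f g ξ x) (hf_pos : ∀ y, 0 < y → 0 < f y)
    (hM : AsymptoticallyMonotoneAtZero f) (hg_pos : ∀ t, 0 < t → 0 < g t)
    (hF' : ∀ y, 0 < y → HasDerivAt F (-(1 / f y)) y) (hF_top : Tendsto F (𝓝[>] 0) atTop)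
    (hF_anti : StrictAntiOn F (Ioi 0)) (hmaps : MapsTo Finv (Ici 0) (Ioi 0))
    (hinv : RightInvOn Finv F (Ici 0)) (hFinv0 : Tendsto Finv atTop (𝓝[>] 0))
    (hx0 : Tendsto x atTop (𝓝[>] 0)) :
    IsRescaledSol (fun t => f (Finv t)) g (fun t => F (x t)) where
  tendsto_atTop := hF_top.comp hx0
  forcing_nonneg := (eventually_gt_atTop 0).mono fun t ht => (hg_pos t ht).le
  coeff_pos := (eventually_ge_atTop 0).mono fun t ht => hf_pos _ (hmaps ht)
  coeff_antitone :=
    hM.comp_antitoneOn (strictAntiOn_of_rightInvOn hF_anti hmaps hinv).antitoneOn hFinv0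
  hasDerivAt := by
    filter_upwards [hx0.eventually self_mem_nhdsWithin, eventually_gt_atTop 0,
      (hF_top.comp hx0).eventually_ge_atTop 0] with t hxt ht hFx
    have hFinv_F : Finv (F (x t)) = x t := hF_anti.injOn (hmaps hFx) hxt (hinv hFx)
    refine ((hF' (x t) hxt).comp t (hx.2.2 t ht)).congr_deriv ?_
    have := hf_pos _ hxt
    rw [hFinv_F]
    field_simp
    ring

lemma one_sub_mul_rpow_eq_self {γ L Λ : ℝ} (hΛ : 0 < Λ) (hL : (1 - Λ) * Λ ^ (-γ) = L) :
    1 - L * Λ ^ γ = Λ := by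
  rw [← hL, mul_assoc, ← rpow_add hΛ, neg_add_cancel, rpow_zero]
  ring

end PerturbedEquation

theorem stmt_7_general {f g F Finv x : ℝ → ℝ} {ξ : ℝ}
    (hf_cont : ContinuousOn f (Ioi 0)) (hf_pos : ∀ y, 0 < y → 0 < f y) (hf_zero : f 0 = 0)
    (hM : AsymptoticallyMonotoneAtZero f) (hg_pos : ∀ t, 0 < t → 0 < g t)
    (hF : ∀ y, 0 < y → F y = ∫ u in y..(1 : ℝ), 1 / f u) (hF_top : Tendsto F (𝓝[>] 0) atTop)
    (hFinv : ∀ t, 0 ≤ t → 0 < Finv t ∧ F (Finv t) = t) (hFinv_to0 : Tendsto Finv atTop (𝓝 0))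
    (hξ : 0 < ξ) (hx : IsSol f g ξ x) (hx_to0 : Tendsto x atTop (𝓝 0))
    (hreg : (∃ β : ℝ, 1 < β ∧ RVat0 f β) ∨ RVatInf (fun t => f (Finv t)) (-1)) :
    (Tendsto (fun t => g t / f (Finv t)) atTop (𝓝 0) →
      Tendsto (fun t => F (x t) / t) atTop (𝓝 1)) ∧
    (∀ L : ℝ, 0 < L → Tendsto (fun t => g t / f (Finv t)) atTop (𝓝 L) →
      (∀ β : ℝ, 1 < β → RVat0 f β →
        ∀ Λ ∈ Ioo (0 : ℝ) 1, (1 - Λ) * Λ ^ (-β / (β - 1)) = L →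
          Tendsto (fun t => F (x t) / t) atTop (𝓝 Λ)) ∧
      (RVatInf (fun t => f (Finv t)) (-1) →
        Tendsto (fun t => F (x t) / t) atTop (𝓝 (1 / (1 + L))))) ∧
    (Tendsto (fun t => g t / f (Finv t)) atTop atTop →
      Tendsto (fun t => F (x t) / t) atTop (𝓝 0)) := by
  have hF' : ∀ y, 0 < y → HasDerivAt F (-(1 / f y)) y := fun _ =>
    hasDerivAt_of_eq_integral_one_div hf_cont hf_pos hF
  have hF_anti : StrictAntiOn F (Ioi 0) := strictAntiOn_of_hasDerivAt_neg_one_div hf_pos hF'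
  have hFinv0 : Tendsto Finv atTop (𝓝[>] 0) := tendsto_nhdsWithin_iff.2
    ⟨hFinv_to0, (eventually_ge_atTop 0).mono fun t ht => (hFinv t ht).1⟩
  have hx0 : Tendsto x atTop (𝓝[>] 0) :=
    tendsto_nhdsWithin_iff.2 ⟨hx_to0, hx.eventually_pos hξ hf_zero hg_pos⟩
  have hu : IsRescaledSol (fun t => f (Finv t)) g (fun t => F (x t)) :=
    hx.isRescaledSol hf_pos hM hg_pos hF' hF_top hF_anti (fun t ht => (hFinv t ht).1)
      (fun t ht => (hFinv t ht).2) hFinv0 hx0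
  have hindex_pos : ∀ β : ℝ, 1 < β → 0 < β / (β - 1) := fun β hβ =>
    div_pos (one_pos.trans hβ) (sub_pos.2 hβ)
  have hcomp : ∀ β, 1 < β → RVat0 f β → RVatInf (fun t => f (Finv t)) (-(β / (β - 1))) :=
    fun β hβ hf => hf.rVatInf_comp_rightInverse hβ hf_pos hM hF' hF_top hF_anti
      ((eventually_ge_atTop 0).mono fun t ht => (hFinv t ht).2) hFinv0
  obtain ⟨γ, hγ, hrv⟩ : ∃ γ : ℝ, 0 < γ ∧ RVatInf (fun t => f (Finv t)) (-γ) :=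
    hreg.elim (fun ⟨β, hβ, hf⟩ => ⟨β / (β - 1), hindex_pos β hβ, hcomp β hβ hf⟩)
      (fun hrv => ⟨1, one_pos, hrv⟩)
  refine ⟨fun hg => ?_, fun L hL hg => ⟨fun β hβ hf Λ hΛ hΛL => ?_, fun hrv₁ => ?_⟩, fun hg => ?_⟩
  · exact hu.tendsto_div_id hγ.le hrv le_rfl hg one_pos (by simp)
  · exact hu.tendsto_div_id (hindex_pos β hβ).le (hcomp β hβ hf) hL.le hg hΛ.1
      (one_sub_mul_rpow_eq_self hΛ.1 (by rwa [← neg_div]))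
  · exact hu.tendsto_div_id zero_le_one hrv₁ hL.le hg (by positivity)
      (by rw [rpow_one]; field_simp; ring)
  · exact hu.tendsto_div_id_zero hrv hg

/-- Theorem 2.6 (Theorem `overallnorv`): under the base hypotheses and Condition (M),
assume either `f ∈ RV₀(β)` for some `β > 1` or `f∘F⁻¹ ∈ RV_∞(-1)`, and that the
solution `x` of `x' = -f(x) + g`, `x(0) = ξ > 0`, satisfies `x(t) → 0`.  If
`g(t)/(f∘F⁻¹)(t) → L ∈ [0,∞]` then: (i) if `L = 0`, `F(x(t))/t → 1`;
(ii) if `L ∈ (0,∞)`, `F(x(t))/t → Λ*`, where `Λ* ∈ (0,1)` is the unique root of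
`(1-Λ*)Λ*^(-β/(β-1)) = L` in the regularly varying case and `Λ* = 1/(1+L)` in the
`f∘F⁻¹ ∈ RV_∞(-1)` case; (iii) if `L = ∞`, `F(x(t))/t → 0`. -/
theorem stmt_7
    (f g F Finv : ℝ → ℝ) (ξ : ℝ) (x : ℝ → ℝ)
    (hf_cont : Continuous f) (hf_lip : LocallyLipschitz f)
    (hf_sign : ∀ y : ℝ, y ≠ 0 → 0 < y * f y) (hf_zero : f 0 = 0)
    (hg_cont : ContinuousOn g (Set.Ici 0)) (hg_pos : ∀ t : ℝ, 0 < t → 0 < g t)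
    (hF : ∀ y : ℝ, 0 < y → F y = ∫ u in y..(1:ℝ), 1 / f u)
    (hF_top : Tendsto F (nhdsWithin 0 (Set.Ioi 0)) atTop)
    (hF_anti : StrictAntiOn F (Set.Ioi 0))
    (hFinv : ∀ t : ℝ, 0 ≤ t → 0 < Finv t ∧ F (Finv t) = t)
    (hFinv_to0 : Tendsto Finv atTop (nhds 0))
    (hξ : 0 < ξ) (hx : IsSol f g ξ x)
    (hM : ∃ δ : ℝ, 0 < δ ∧ ∃ φ : ℝ → ℝ, StrictMonoOn φ (Set.Ioo 0 δ) ∧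
      Tendsto (fun y => f y / φ y) (nhdsWithin 0 (Set.Ioi 0)) (nhds 1))
    (hreg : (∃ β : ℝ, 1 < β ∧ RVat0 f β) ∨ RVatInf (fun t => f (Finv t)) (-1))
    (hx_to0 : Tendsto x atTop (nhds 0)) :
    (Tendsto (fun t => g t / f (Finv t)) atTop (nhds 0) →
      Tendsto (fun t => F (x t) / t) atTop (nhds 1)) ∧
    (∀ L : ℝ, 0 < L → Tendsto (fun t => g t / f (Finv t)) atTop (nhds L) →
      (∀ β : ℝ, 1 < β → RVat0 f β →
        ∀ Λ ∈ Set.Ioo (0:ℝ) 1, (1 - Λ) * Λ ^ (-β / (β - 1)) = L →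
          Tendsto (fun t => F (x t) / t) atTop (nhds Λ)) ∧
      (RVatInf (fun t => f (Finv t)) (-1) →
        Tendsto (fun t => F (x t) / t) atTop (nhds (1 / (1 + L))))) ∧
    (Tendsto (fun t => g t / f (Finv t)) atTop atTop →
      Tendsto (fun t => F (x t) / t) atTop (nhds 0)) :=
  let ⟨δ, hδ, φ, hφ, hfφ⟩ := hM
  stmt_7_general hf_cont.continuousOn
    (fun y hy => (mul_pos_iff_of_pos_left hy).1 (hf_sign y hy.ne')) hf_zero
    ⟨δ, hδ, φ, hφ.monotoneOn, isEquivalent_of_tendsto_one hfφ⟩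
    hg_pos hF hF_top hFinv hFinv_to0 hξ hx hx_to0 hreg
end
end
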